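/- If q is a real number with (1 + √5)/2 < q ≤ 2, then the set U_q of numbers in J_q having a unique expansion in base q is infinite. -/

import Mathlib

noncomputable section

/-- The largest integer smaller than `q`, as a natural number (for `q > 1` this is `⌈q⌉ - 1`). -/
def topDigit (q : ℝ) : ℕ := ⌈q⌉.toNat - 1

/-- Greedy digit associated to a remainder `y` : the largest nonnegative integer `b` with
`b < q` and `b ≤ q * y`. -/
def gDigit (q y : ℝ) : ℕ := min (topDigit q) ⌊q * y⌋₊

/-- Remainders of the greedy algorithm in base `q` starting from `x`. -/
def gRem (q x : ℝ) : ℕ → ℝ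
  | 0 => x
  | n + 1 => q * gRem q x n - gDigit q (gRem q x n)

/-- The greedy expansion of `x` in base `q`, `0`-indexed: `greedy q x n` is the digit `b_{n+1}`,
i.e. the largest integer smaller than `q` such that `∑_{i ≤ n} (greedy q x i) / q^(i+1) ≤ x`. -/
def greedy (q x : ℝ) (n : ℕ) : ℕ := gDigit q (gRem q x n)

/-- Quasi-greedy digit associated to a remainder `y` : the largest nonnegative integer `b` with
`b < q` and `b < q * y` (it is `0` when no such integer exists, matching the convention that the
quasi-greedy expansion of `0` is `0^∞`). -/
def qgDigit (q y : ℝ) : ℕ := min (topDigit q) (⌈q * y⌉.toNat - 1)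

/-- Remainders of the quasi-greedy algorithm in base `q` starting from `x`. -/
def qgRem (q x : ℝ) : ℕ → ℝ
  | 0 => x
  | n + 1 => q * qgRem q x n - qgDigit q (qgRem q x n)

/-- The quasi-greedy expansion of `x` in base `q`, `0`-indexed: `quasiGreedy q x n` is the digit
`a_{n+1}`, i.e. the largest integer smaller than `q` with `∑_{i ≤ n} (quasiGreedy q x i) / q^(i+1) < x`
(with the convention `quasiGreedy q 0 = 0^∞`). -/
def quasiGreedy (q x : ℝ) (n : ℕ) : ℕ := qgDigit q (qgRem q x n)

/-- `alphaSeq q` is the quasi-greedy expansion of `1` in base `q` (`0`-indexed: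
`alphaSeq q (i-1) = α_i(q)`). -/
def alphaSeq (q : ℝ) : ℕ → ℕ := quasiGreedy q 1

/-- Strict lexicographic order on digit sequences. -/
def lexLt (a b : ℕ → ℕ) : Prop := ∃ n, (∀ i, i < n → a i = b i) ∧ a n < b n

/-- Lexicographic order on digit sequences. -/
def lexLe (a b : ℕ → ℕ) : Prop := lexLt a b ∨ a = b

/-- `c` is an expansion of `x` in base `q`: the digits are nonnegative integers smaller than `q`
and `x = ∑_{i≥0} c_i / q^(i+1)`. -/
def IsExpansion (q : ℝ) (c : ℕ → ℕ) (x : ℝ) : Prop :=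
  (∀ i, (c i : ℝ) < q) ∧ x = ∑' i : ℕ, (c i : ℝ) / q ^ (i + 1)

/-- The interval `J_q = [0, (⌈q⌉-1)/(q-1)]` of numbers having an expansion in base `q`. -/
def Jset (q : ℝ) : Set ℝ := Set.Icc 0 (((⌈q⌉ : ℝ) - 1) / (q - 1))

/-- `USet q` is the set `𝒰_q` of numbers `x ∈ J_q` having a unique expansion in base `q`. -/
def USet (q : ℝ) : Set ℝ := {x | x ∈ Jset q ∧ ∃! c, IsExpansion q c x}

/-- `USeq q` is the set `𝒰_q'` of univoque sequences in base `q`, i.e. sequences that are the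
unique expansion in base `q` of some number. -/
def USeq (q : ℝ) : Set (ℕ → ℕ) :=
  {c | ∃ x, IsExpansion q c x ∧ ∀ c', IsExpansion q c' x → c' = c}

/-- The set `𝒰` of univoque bases: `q > 1` such that `1` has a unique expansion in base `q`. -/
def UnivBases : Set ℝ := {q | 1 < q ∧ ∃! c, IsExpansion q c 1}

/-- The set `𝒱_q`: numbers `x ∈ J_q` whose quasi-greedy expansion `(a_i)` satisfies
`overline{a_{n+1} a_{n+2} …} ≤ α_1 α_2 …` whenever `a_n > 0`. -/
def VSet (q : ℝ) : Set ℝ :=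
  {x | x ∈ Jset q ∧ ∀ n, 0 < quasiGreedy q x n →
    lexLe (fun i => topDigit q - quasiGreedy q x (n + 1 + i)) (alphaSeq q)}

/-- `VSeq q` is the set `𝒱_q'` of quasi-greedy expansions of elements of `𝒱_q`. -/
def VSeq (q : ℝ) : Set (ℕ → ℕ) := (fun x => quasiGreedy q x) '' VSet q

/-- The set `𝒱` of bases `q > 1` with `overline{α_{k+1} α_{k+2} …} ≤ α_1 α_2 …` for all `k ≥ 1`. -/
def VBases : Set ℝ :=
  {q | 1 < q ∧ ∀ k, 1 ≤ k → lexLe (fun i => topDigit q - alphaSeq q (k + i)) (alphaSeq q)}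

/-- A digit sequence is infinite if it has infinitely many nonzero terms. -/
def InfiniteSeq (c : ℕ → ℕ) : Prop := ∀ N, ∃ i, N ≤ i ∧ c i ≠ 0

/-- A digit sequence is ultimately periodic if some tail of it is periodic. -/
def UltimatelyPeriodic (c : ℕ → ℕ) : Prop := ∃ n p, 0 < p ∧ ∀ i, n ≤ i → c (i + p) = c i

end

/-! The numbers `A / q ^ k`, `k ≥ 0`, with `A = q / (q ^ 2 - 1)` the value of `(10)^∞`, all belong to
`USet q`; they are the values of `0^k (10)^∞` and are pairwise distinct.

Since `q ≤ 2`, all digits are `0` or `1`, and every number with an expansion lies in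
`[0, 1 / (q - 1)]`. If `c` expands `x`, the shifted sequence expands `q * x - c 0`, which must lie in
this interval. For `q` above the golden ratio, i.e. `q + 1 < q ^ 2`, this forces the first digit:
`x = A` has first digit `1`, because `q * A > 1 / (q - 1)`, and the next remainder is `A / q`;
`x = A / q ^ (k + 1)` has first digit `0`, because `A < 1`, and the next remainder is `A / q ^ k`.
The family is thus closed under taking remainders, and uniqueness follows by induction on the index
of the digit (`expansion_digit_unique`). -/

theorem digit_le_one {q : ℝ} (h2 : q ≤ 2) {c : ℕ → ℕ} {x : ℝ} (h : IsExpansion q c x) (i : ℕ) :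
    c i ≤ 1 := by
  have h3 : (c i : ℝ) < 2 := lt_of_lt_of_le (h.1 i) h2
  have h4 : c i < 2 := by exact_mod_cast h3
  omega

theorem hasSum_geom {q : ℝ} (hq : 1 < q) :
    HasSum (fun i : ℕ => 1 / q ^ (i + 1)) (1 / (q - 1)) := by
  have hq0 : 0 < q := by linarith
  have hq1 : q - 1 ≠ 0 := by linarith
  have h := (hasSum_geometric_of_lt_one (inv_nonneg.2 hq0.le) (inv_lt_one_of_one_lt₀ hq)).mul_left q⁻¹
  have e1 : (fun i : ℕ => 1 / q ^ (i + 1)) = fun i => q⁻¹ * q⁻¹ ^ i := by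
    funext i
    rw [pow_succ, inv_pow]
    field_simp
  have e2 : 1 / (q - 1) = q⁻¹ * (1 - q⁻¹)⁻¹ := by
    rw [← mul_inv, mul_sub, mul_one, mul_inv_cancel₀ hq0.ne', one_div]
  rw [e1, e2]
  exact h

theorem summable_digits {q : ℝ} (hq : 1 < q) {c : ℕ → ℕ} (hc : ∀ i, c i ≤ 1) :
    Summable (fun i : ℕ => (c i : ℝ) / q ^ (i + 1)) := by
  refine Summable.of_nonneg_of_le (fun i => by positivity) (fun i => ?_) (hasSum_geom hq).summable
  have : (c i : ℝ) ≤ 1 := by exact_mod_cast hc i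
  gcongr

theorem expansion_nonneg {q : ℝ} (hq : 1 < q) {c : ℕ → ℕ} {x : ℝ} (h : IsExpansion q c x) :
    0 ≤ x := by
  rw [h.2]
  exact tsum_nonneg fun i => by positivity

theorem expansion_le {q : ℝ} (hq : 1 < q) (h2 : q ≤ 2) {c : ℕ → ℕ} {x : ℝ}
    (h : IsExpansion q c x) : x ≤ 1 / (q - 1) := by
  have hc := digit_le_one h2 h
  rw [h.2, ← (hasSum_geom hq).tsum_eq]
  refine (summable_digits hq hc).tsum_le_tsum (fun i => ?_) (hasSum_geom hq).summable
  have : (c i : ℝ) ≤ 1 := by exact_mod_cast hc i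
  gcongr

theorem expansion_tail {q : ℝ} (hq : 1 < q) (h2 : q ≤ 2) {c : ℕ → ℕ} {x : ℝ}
    (h : IsExpansion q c x) : IsExpansion q (fun i => c (i + 1)) (q * x - c 0) := by
  refine ⟨fun i => h.1 _, ?_⟩
  have hq0 : q ≠ 0 := by linarith
  rw [h.2, (summable_digits hq (digit_le_one h2 h)).tsum_eq_zero_add, mul_add, ← tsum_mul_left]
  have h0 : q * ((c 0 : ℝ) / q ^ (0 + 1)) = c 0 := by rw [zero_add, pow_one]; field_simp
  rw [h0, add_sub_cancel_left]
  refine tsum_congr fun i => ?_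
  rw [pow_succ q (i + 1)]
  field_simp

/-- Prefixing the digit `0` divides the value by `q`. -/
theorem expansion_cons_zero {q : ℝ} (hq : 1 < q) (h2 : q ≤ 2) {c : ℕ → ℕ} {x : ℝ}
    (h : IsExpansion q c x) : ∃ d, IsExpansion q d (x / q) := by
  have hq0 : q ≠ 0 := by linarith
  obtain ⟨d, hd0, hds⟩ : ∃ d : ℕ → ℕ, d 0 = 0 ∧ ∀ i, d (i + 1) = c i :=
    ⟨fun i => if i = 0 then 0 else c (i - 1), by simp, by simp⟩
  have hd : ∀ i, d i ≤ 1 := by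
    rintro (_ | i)
    · rw [hd0]; exact Nat.zero_le _
    · rw [hds]; exact digit_le_one h2 h i
  refine ⟨d, ?_, ?_⟩
  · intro i
    have : (d i : ℝ) ≤ 1 := by exact_mod_cast hd i
    linarith
  · rw [(summable_digits hq hd).tsum_eq_zero_add, h.2, ← tsum_div_const]
    rw [hd0, Nat.cast_zero, zero_div, zero_add]
    refine tsum_congr fun i => ?_
    rw [hds, pow_succ q (i + 1), div_div]

/-- The sequence `(10)^∞` expands `q / (q ^ 2 - 1)`. -/
theorem expansion_alternating {q : ℝ} (hq : 1 < q) :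
    IsExpansion q (fun i => if Even i then 1 else 0) (q / (q ^ 2 - 1)) := by
  have hq0 : 0 < q := by linarith
  have hq2 : 1 < q ^ 2 := by nlinarith
  have hne : q ^ 2 - 1 ≠ 0 := by linarith
  refine ⟨fun i => ?_, ?_⟩
  · dsimp only
    split_ifs <;> push_cast <;> linarith
  · symm
    apply HasSum.tsum_eq
    rw [← add_zero (q / (q ^ 2 - 1))]
    apply HasSum.even_add_odd
    · have h := (hasSum_geometric_of_lt_one (inv_nonneg.2 (sq_nonneg q))
        (inv_lt_one_of_one_lt₀ hq2)).mul_left q⁻¹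
      have e1 : (fun i : ℕ => ((if Even (2 * i) then 1 else 0 : ℕ) : ℝ) / q ^ (2 * i + 1)) =
          fun i => q⁻¹ * (q ^ 2)⁻¹ ^ i := by
        funext i
        simp only [even_two_mul, if_true, Nat.cast_one]
        rw [pow_succ, pow_mul, inv_pow]
        field_simp
      have e2 : q / (q ^ 2 - 1) = q⁻¹ * (1 - (q ^ 2)⁻¹)⁻¹ := by
        have e3 : 1 - (q ^ 2)⁻¹ = (q ^ 2 - 1) / q ^ 2 := by field_simp
        rw [e3, inv_div]
        field_simp
      rw [e1, e2]
      exact h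
    · convert hasSum_zero using 1
      funext i
      have : ¬ Even (2 * i + 1) := by simp
      simp [this]

theorem exists_expansion {q : ℝ} (hq : 1 < q) (h2 : q ≤ 2) (k : ℕ) :
    ∃ c, IsExpansion q c (q / (q ^ 2 - 1) / q ^ k) := by
  induction k with
  | zero => exact ⟨_, by simpa using expansion_alternating hq⟩
  | succ k ih =>
    obtain ⟨c, hc⟩ := ih
    rw [pow_succ q k, ← div_div]
    exact expansion_cons_zero hq h2 hc

/-- The first digit of `A = q / (q ^ 2 - 1)` is forced to be `1`: the digit `0` would leave the
remainder `q * A`, which exceeds `1 / (q - 1)`. -/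
theorem first_digit_zero {q : ℝ} (hq : 1 < q) (hg : q + 1 < q ^ 2) (h2 : q ≤ 2) {c : ℕ → ℕ}
    (h : IsExpansion q c (q / (q ^ 2 - 1))) : c 0 = 1 := by
  have h1 := digit_le_one h2 h 0
  by_contra hne
  have h0 : c 0 = 0 := by omega
  have ht := expansion_le hq h2 (expansion_tail hq h2 h)
  rw [h0, Nat.cast_zero, sub_zero, ← mul_div_assoc,
    div_le_div_iff₀ (by linarith) (by linarith)] at ht
  nlinarith

/-- The first digit of `A / q ^ (k + 1)` is forced to be `0`: the digit `1` would leave the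
remainder `A / q ^ k - 1`, which is negative. -/
theorem first_digit_succ {q : ℝ} (hq : 1 < q) (hg : q + 1 < q ^ 2) (h2 : q ≤ 2) {c : ℕ → ℕ}
    {k : ℕ} (h : IsExpansion q c (q / (q ^ 2 - 1) / q ^ (k + 1))) : c 0 = 0 := by
  have hq0 : 0 < q := by linarith
  have h1 := digit_le_one h2 h 0
  by_contra hne
  have h0 : c 0 = 1 := by omega
  have ht := expansion_nonneg hq (expansion_tail hq h2 h)
  have hA : q / (q ^ 2 - 1) < 1 := by rw [div_lt_one (by linarith)]; linarith
  have hA0 : 0 ≤ q / (q ^ 2 - 1) := div_nonneg hq0.le (by linarith)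
  have hk : q / (q ^ 2 - 1) / q ^ k ≤ q / (q ^ 2 - 1) := div_le_self hA0 (one_le_pow₀ hq.le)
  have he : q * (q / (q ^ 2 - 1) / q ^ (k + 1)) = q / (q ^ 2 - 1) / q ^ k := by
    rw [pow_succ q k]; field_simp
  rw [h0, he, Nat.cast_one] at ht
  linarith

theorem expansion_digit_unique {q : ℝ} (hq : 1 < q) (hg : q + 1 < q ^ 2) (h2 : q ≤ 2) (n : ℕ) :
    ∀ (k : ℕ) (c d : ℕ → ℕ), IsExpansion q c (q / (q ^ 2 - 1) / q ^ k) →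
      IsExpansion q d (q / (q ^ 2 - 1) / q ^ k) → c n = d n := by
  have hq0 : 0 < q := by linarith
  have hne : q ^ 2 - 1 ≠ 0 := by linarith
  -- One step of the remainder dynamics: `A ↦ A / q` and `A / q ^ (k + 1) ↦ A / q ^ k`.
  have step : ∀ k, ∃ a j : ℕ, ∀ c, IsExpansion q c (q / (q ^ 2 - 1) / q ^ k) →
      c 0 = a ∧ IsExpansion q (fun i => c (i + 1)) (q / (q ^ 2 - 1) / q ^ j) := by
    rintro (_ | k)
    · refine ⟨1, 1, fun c hc => ?_⟩
      rw [pow_zero, div_one] at hc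
      have h0 := first_digit_zero hq hg h2 hc
      refine ⟨h0, ?_⟩
      convert expansion_tail hq h2 hc using 1
      rw [h0]
      field_simp
      push_cast
      ring
    · refine ⟨0, k, fun c hc => ?_⟩
      have h0 := first_digit_succ hq hg h2 hc
      refine ⟨h0, ?_⟩
      convert expansion_tail hq h2 hc using 1
      rw [h0, pow_succ q k, Nat.cast_zero, sub_zero]
      field_simp
  induction n with
  | zero =>
    intro k c d hc hd
    obtain ⟨a, j, h⟩ := step k
    rw [(h c hc).1, (h d hd).1]
  | succ n ih =>
    intro k c d hc hd
    obtain ⟨a, j, h⟩ := step k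
    exact ih j _ _ (h c hc).2 (h d hd).2

/-- If `(1+√5)/2 < q ≤ 2`, then `𝒰_q` is infinite. -/
theorem USet_infinite_of_gt_golden (q : ℝ) (h1 : (1 + Real.sqrt 5) / 2 < q) (h2 : q ≤ 2) :
    (USet q).Infinite := by
  have h5 : Real.sqrt 5 ^ 2 = 5 := Real.sq_sqrt (by norm_num)
  have h5' : 2 < Real.sqrt 5 := by
    rw [Real.lt_sqrt (by norm_num)]; norm_num
  have hq : 1 < q := by linarith
  have hg : q + 1 < q ^ 2 := by nlinarith
  have hq0 : 0 < q := by linarith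
  have hA0 : 0 < q / (q ^ 2 - 1) := div_pos hq0 (by linarith)
  refine Set.infinite_of_injective_forall_mem (f := fun k : ℕ => q / (q ^ 2 - 1) / q ^ k) ?_ ?_
  · intro a b hab
    dsimp only at hab
    rw [div_eq_mul_inv, div_eq_mul_inv _ (q ^ b)] at hab
    exact pow_right_injective₀ hq0 hq.ne' (inv_injective (mul_left_cancel₀ hA0.ne' hab))
  · intro k
    obtain ⟨c, hc⟩ := exists_expansion hq h2 k
    refine ⟨⟨expansion_nonneg hq hc, ?_⟩, c, hc, fun d hd =>
      funext fun n => expansion_digit_unique hq hg h2 n k d c hd hc⟩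
    have hceil : ⌈q⌉ = 2 := by
      rw [Int.ceil_eq_iff]
      constructor <;> push_cast <;> linarith
    have hle := expansion_le hq h2 hc
    rw [hceil]
    norm_num at hle ⊢
    exact hle
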